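/- For every finite poset P and every ideal I ≠ P, the flip graph 𝓕³(P) on the ideals of P, where two ideals are adjacent if their symmetric difference has size at most 3, contains a Hamiltonian path from I to the full ideal P. Symmetrically, for every ideal I ≠ ∅ there is a Hamiltonian path in 𝓕³(P) from I to the empty ideal. -/

import Mathlib

open Finset

/-!
Removing a maximal element from a nonempty ideal leaves an ideal, so the graph on the ideals whose
edges are the flips of a single element is connected. Every path of length at most three in it
changes at most three elements, and by Sekanina's theorem the cube of a finite connected graph has
a Hamiltonian path between any two distinct vertices.

For Sekanina's theorem, pass to a spanning tree and induct on forests. Delete the first edge `uw`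
of the path from `u` to `v`; its two ends lie in different components. Span the component of `u` by
a path from `u` to a vertex within distance one of `u`, and that of `w` by a path from a vertex
within distance one of `w` to `v`: the two inner ends are at distance at most three.
-/

section SpanningPath

variable {V : Type*} {G H : SimpleGraph V} {S T : Set V} {u u' v v' w : V}

/-- There is a path in `G` from `u` to `v` whose vertex set is exactly `S`. For `S = Set.univ` this
is a Hamiltonian path of `G`. -/
def HasSpanningPath (G : SimpleGraph V) (S : Set V) (u v : V) : Prop :=
  ∃ p : G.Walk u v, p.IsPath ∧ ∀ x, x ∈ p.support ↔ x ∈ S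

namespace HasSpanningPath

lemma singleton (G : SimpleGraph V) (u : V) : HasSpanningPath G {u} u u :=
  ⟨.nil, .nil, by simp⟩

lemma symm (h : HasSpanningPath G S u v) : HasSpanningPath G S v u := by
  obtain ⟨p, hp, hS⟩ := h
  exact ⟨p.reverse, hp.reverse, by simpa using hS⟩

lemma mono (hGH : G ≤ H) (h : HasSpanningPath G S u v) : HasSpanningPath H S u v := by
  obtain ⟨p, hp, hS⟩ := h
  exact ⟨p.mapLe hGH, hp.mapLe hGH, by simpa using hS⟩

lemma left_mem (h : HasSpanningPath G S u v) : u ∈ S := by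
  obtain ⟨p, -, hS⟩ := h
  exact (hS u).1 p.start_mem_support

lemma union (hS : HasSpanningPath G S u u') (hT : HasSpanningPath G T v' v)
    (hadj : G.Adj u' v') (hST : Disjoint S T) : HasSpanningPath G (S ∪ T) u v := by
  obtain ⟨p, hp, hpS⟩ := hS
  obtain ⟨q, hq, hqT⟩ := hT
  have hsupport : (p.append (q.cons hadj)).support = p.support ++ q.support := by
    simp [SimpleGraph.Walk.support_append]
  refine ⟨p.append (q.cons hadj), .mk' ?_, fun x => ?_⟩
  · rw [hsupport, List.nodup_append']
    refine ⟨hp.support_nodup, hq.support_nodup, fun x hxp hxq => ?_⟩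
    exact Set.disjoint_left.1 hST ((hpS x).1 hxp) ((hqT x).1 hxq)
  · rw [hsupport, List.mem_append, hpS, hqT, Set.mem_union]

end HasSpanningPath

end SpanningPath

section Sekanina

variable {V : Type*} {G H K : SimpleGraph V} {k : ℕ} {u v w : V}

/-- The `k`-th power of a graph: distinct vertices are adjacent when their distance is at most
`k`. The extended distance is used because `SimpleGraph.dist` vanishes between components. -/
def graphPower (G : SimpleGraph V) (k : ℕ) : SimpleGraph V where
  Adj u v := u ≠ v ∧ G.edist u v ≤ k
  symm := ⟨fun _ _ h => ⟨h.1.symm, G.edist_comm.trans_le h.2⟩⟩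
  loopless := ⟨fun _ h => h.1 rfl⟩

lemma graphPower_mono (hGH : G ≤ H) : graphPower G k ≤ graphPower H k :=
  fun _ _ h => ⟨h.1, (SimpleGraph.edist_anti hGH).trans h.2⟩

lemma setOf_reachable_eq_union_deleteEdges (hadj : G.Adj u w) :
    {x | G.Reachable u x} = {x | (G.deleteEdges {s(u, w)}).Reachable u x} ∪
      {x | (G.deleteEdges {s(u, w)}).Reachable w x} := by
  have hle := G.deleteEdges_le {s(u, w)}
  ext x
  refine ⟨fun hx => ?_, fun hx => hx.elim (·.mono hle) (hadj.reachable.trans <| ·.mono hle)⟩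
  rw [Set.mem_ofPred_eq, SimpleGraph.reachable_iff_reflTransGen] at hx
  induction hx with
  | refl => exact .inl .rfl
  | @tail y z _ hyz hy =>
    by_cases he : s(y, z) = s(u, w)
    · rcases Sym2.mem_iff.1 (he ▸ Sym2.mem_mk_right y z) with rfl | rfl
      · exact .inl .rfl
      · exact .inr .rfl
    · have hyz' : (G.deleteEdges {s(u, w)}).Reachable y z :=
        (SimpleGraph.deleteEdges_adj.2 ⟨hyz, he⟩).reachable
      exact hy.imp (·.trans hyz') (·.trans hyz')

lemma exists_edist_le_one_hasSpanningPath
    (hspan : ∀ y, u ≠ y → H.Reachable u y → HasSpanningPath K {x | H.Reachable u x} u y)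
    (huv : H.Reachable u v) :
    ∃ y, H.edist v y ≤ 1 ∧ HasSpanningPath K {x | H.Reachable u x} u y := by
  by_cases hne : u = v
  · subst hne
    by_cases hnbr : ∃ y, H.Adj u y
    · obtain ⟨y, hy⟩ := hnbr
      exact ⟨y, SimpleGraph.edist_le_one_iff_adj_or_eq.2 (.inl hy), hspan y hy.ne hy.reachable⟩
    · have hisolated : {x | H.Reachable u x} = {u} := by
        refine Set.Subset.antisymm (fun x hx => ?_) (by simp)
        by_contra hxu
        obtain ⟨p⟩ := hx
        exact hnbr ⟨_, p.adj_snd (p.not_nil_of_ne (Ne.symm hxu))⟩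
      exact ⟨u, by simp, hisolated ▸ .singleton K u⟩
  · exact ⟨v, by simp, hspan v hne huv⟩

lemma edist_le_three_of_adj {a b : V} (hadj : G.Adj u w) (ha : G.edist u a ≤ 1)
    (hb : G.edist w b ≤ 1) : G.edist a b ≤ 3 :=
  calc G.edist a b ≤ G.edist a w + G.edist w b := G.edist_triangle
    _ ≤ G.edist a u + G.edist u w + G.edist w b := by gcongr; exact G.edist_triangle
    _ ≤ 1 + 1 + 1 := by
        gcongr
        · rwa [G.edist_comm]
        · exact (SimpleGraph.edist_eq_one_iff_adj.2 hadj).le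
    _ = 3 := by norm_num

theorem hasSpanningPath_graphPower_three_of_isAcyclic [Finite V] (hG : G.IsAcyclic) (huv : u ≠ v)
    (hreach : G.Reachable u v) :
    HasSpanningPath (graphPower G 3) {x | G.Reachable u x} u v := by
  induction G using WellFoundedLT.induction generalizing u v with
  | ind G ih =>
    obtain ⟨p, hp⟩ := hreach.exists_isPath
    cases p with
    | nil => exact absurd rfl huv
    | @cons _ w _ hadj q =>
      obtain ⟨-, huq⟩ := (SimpleGraph.Walk.cons_isPath_iff hadj q).1 hp
      set H := G.deleteEdges {s(u, w)}
      have hHG : H ≤ G := G.deleteEdges_le _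
      have hbridge : ¬ H.Reachable u w :=
        SimpleGraph.isAcyclic_iff_forall_adj_isBridge.1 hG hadj
      have hlt : H < G := hHG.lt_of_ne fun h => hbridge (h ▸ hadj.reachable)
      have hwv : H.Reachable w v := SimpleGraph.reachable_deleteEdges_iff_exists_walk.2
        ⟨q, fun he => huq (q.fst_mem_support_of_mem_edges he)⟩
      have hspan (x y : V) (hxy : x ≠ y) (h : H.Reachable x y) :=
        (ih H hlt (hG.anti hHG) hxy h).mono (graphPower_mono hHG)
      obtain ⟨a, hua, hpath_u⟩ := exists_edist_le_one_hasSpanningPath (hspan u) .rfl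
      obtain ⟨b, hwb, hpath_v⟩ := exists_edist_le_one_hasSpanningPath (hspan v) hwv.symm
      have hcomp : {x | H.Reachable v x} = {x | H.Reachable w x} :=
        Set.ext fun x => ⟨hwv.trans, hwv.symm.trans⟩
      rw [hcomp] at hpath_v
      have hdisj : Disjoint {x | H.Reachable u x} {x | H.Reachable w x} :=
        Set.disjoint_left.2 fun x hux hwx => hbridge (hux.trans hwx.symm)
      have hab : (graphPower G 3).Adj a b :=
        ⟨hdisj.ne_of_mem hpath_u.symm.left_mem hpath_v.symm.left_mem, edist_le_three_of_adj hadj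
          ((SimpleGraph.edist_anti hHG).trans hua) ((SimpleGraph.edist_anti hHG).trans hwb)⟩
      rw [setOf_reachable_eq_union_deleteEdges hadj]
      exact hpath_u.union hpath_v.symm hab hdisj

theorem exists_isHamiltonian_graphPower_three [Finite V] [DecidableEq V] (hG : G.Connected)
    (huv : u ≠ v) : ∃ p : (graphPower G 3).Walk u v, p.IsHamiltonian := by
  obtain ⟨T, hTG, hT⟩ := hG.exists_isTree_le
  obtain ⟨p, hp, hsupport⟩ := (hasSpanningPath_graphPower_three_of_isAcyclic hT.isAcyclic huv
    (hT.connected u v)).mono (graphPower_mono hTG)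
  exact ⟨p, hp.isHamiltonian_of_mem fun x => (hsupport x).2 (hT.connected u x)⟩

end Sekanina

section FlipGraph

variable {α : Type*} [DecidableEq α] {F : Set (Finset α)} {j k : ℕ}

/-- The flip graph `𝓕ᵏ` on a family of finite sets: two distinct members are adjacent when they
differ in at most `k` elements. -/
def flipGraph (F : Set (Finset α)) (k : ℕ) : SimpleGraph F where
  Adj A B := A ≠ B ∧ #(symmDiff A.1 B.1) ≤ k
  symm := ⟨fun A B h => ⟨h.1.symm, symmDiff_comm A.1 B.1 ▸ h.2⟩⟩
  loopless := ⟨fun _ h => h.1 rfl⟩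

lemma card_symmDiff_le_mul_length {A B : F} (p : (flipGraph F j).Walk A B) :
    #(symmDiff A.1 B.1) ≤ j * p.length := by
  induction p with
  | nil => simp
  | @cons A B C hAB q ih =>
    calc #(symmDiff A.1 C.1) ≤ #(symmDiff A.1 B.1 ∪ symmDiff B.1 C.1) :=
          card_le_card (symmDiff_triangle ..)
      _ ≤ #(symmDiff A.1 B.1) + #(symmDiff B.1 C.1) := card_union_le ..
      _ ≤ j + j * q.length := add_le_add hAB.2 ih
      _ = j * (q.cons hAB).length := by rw [SimpleGraph.Walk.length_cons]; ring

lemma graphPower_flipGraph_le : graphPower (flipGraph F j) k ≤ flipGraph F (j * k) := by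
  rintro A B ⟨hne, hdist⟩
  obtain ⟨p, hp⟩ := SimpleGraph.exists_walk_of_edist_ne_top
    (ne_top_of_le_ne_top (ENat.natCast_ne_top k) hdist)
  have hlength : p.length ≤ k := by rwa [← hp, Nat.cast_le] at hdist
  exact ⟨hne, (card_symmDiff_le_mul_length p).trans (Nat.mul_le_mul_left j hlength)⟩

/-- An accessible set system: every nonempty member can lose one of its elements and remain in the
family. Antimatroids and greedoids are the standard examples. -/
def IsAccessible (F : Set (Finset α)) : Prop :=
  ∀ A ∈ F, A.Nonempty → ∃ a ∈ A, A.erase a ∈ F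

lemma IsAccessible.exists_reachable_empty (hF : IsAccessible F) (A : F) :
    ∃ E : F, E.1 = ∅ ∧ (flipGraph F 1).Reachable A E := by
  obtain ⟨A, hA⟩ := A
  induction A using Finset.strongInduction with
  | H A ih =>
    rcases A.eq_empty_or_nonempty with rfl | hne
    · exact ⟨⟨∅, hA⟩, rfl, .rfl⟩
    · obtain ⟨a, ha, haF⟩ := hF A hA hne
      obtain ⟨E, hE, hreach⟩ := ih (A.erase a) (erase_ssubset ha) haF
      have hsymmDiff : symmDiff A (A.erase a) = {a} := by
        rw [symmDiff_of_ge (erase_subset a A), sdiff_erase_self ha]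
      have hflip : (flipGraph F 1).Adj ⟨A, hA⟩ ⟨A.erase a, haF⟩ :=
        ⟨fun h => (erase_ssubset ha).ne (congrArg Subtype.val h).symm, by simp [hsymmDiff]⟩
      exact ⟨E, hE, hflip.reachable.trans hreach⟩

lemma IsAccessible.preconnected_flipGraph_one (hF : IsAccessible F) :
    (flipGraph F 1).Preconnected := by
  intro A B
  obtain ⟨E, hE, hAE⟩ := hF.exists_reachable_empty A
  obtain ⟨E', hE', hBE'⟩ := hF.exists_reachable_empty B
  obtain rfl : E = E' := Subtype.ext (hE.trans hE'.symm)
  exact hAE.trans hBE'.symm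

lemma isAccessible_setOf_isLowerSet (α : Type*) [PartialOrder α] [DecidableEq α] :
    IsAccessible {J : Finset α | IsLowerSet (J : Set α)} := by
  intro J hJ hne
  obtain ⟨a, ha⟩ := J.exists_maximal hne
  refine ⟨a, ha.prop, ?_⟩
  rw [Set.mem_ofPred_eq, coe_erase]
  exact IsLowerSet.erase hJ fun b hb hab => (ha.eq_of_le hb hab).symm

end FlipGraph

theorem stmt_19_general {α : Type*} [DecidableEq α] {F : Set (Finset α)} [Finite F]
    (hF : IsAccessible F) {I K : Finset α} (hI : I ∈ F) (hK : K ∈ F) (hIK : I ≠ K) :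
    ∃ L : List (Finset α), L.Nodup ∧ (∀ J, J ∈ L ↔ J ∈ F) ∧
      L.IsChain (fun A B => #(symmDiff A B) ≤ 3) ∧ L.head? = some I ∧ L.getLast? = some K := by
  have hconn : (flipGraph F 1).Connected :=
    { preconnected := hF.preconnected_flipGraph_one, nonempty := ⟨⟨I, hI⟩⟩ }
  obtain ⟨p, hp⟩ := exists_isHamiltonian_graphPower_three hconn
    (u := ⟨I, hI⟩) (v := ⟨K, hK⟩) (fun h => hIK (congrArg Subtype.val h))
  refine ⟨p.support.map Subtype.val, hp.isPath.support_nodup.map Subtype.val_injective, fun J => ?_,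
    ?_, ?_, ?_⟩
  · simp [hp.mem_support]
  · exact List.isChain_map_of_isChain _ (fun A B hAB => (graphPower_flipGraph_le hAB).2)
      p.isChain_adj_support
  · rw [List.head?_map, List.head?_eq_some_head p.support_ne_nil, p.head_support, Option.map_some]
  · rw [List.getLast?_map, List.getLast?_eq_some_getLast p.support_ne_nil, p.getLast_support,
      Option.map_some]

/-- For every finite poset `P`: for every ideal `I ≠ P` the flip graph `𝓕³(P)` on the
ideals of `P` (two ideals adjacent iff they differ in at most three elements) contains a
Hamiltonian path from `I` to the full ideal `P`; symmetrically, for every ideal `I ≠ ∅`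
it contains a Hamiltonian path from `I` to the empty ideal. A Hamiltonian path is
modeled as a list visiting every ideal exactly once, with consecutive entries differing
in at most three elements. -/
theorem stmt_19 (α : Type*) [Fintype α] [PartialOrder α] [DecidableEq α] :
    (∀ I : Finset α, (∀ u ∈ I, ∀ v, v ≤ u → v ∈ I) → I ≠ Finset.univ →
      ∃ L : List (Finset α), L.Nodup ∧
        (∀ J : Finset α, J ∈ L ↔ ∀ u ∈ J, ∀ v, v ≤ u → v ∈ J) ∧
        List.Chain' (fun A B => (symmDiff A B).card ≤ 3) L ∧
        L.head? = some I ∧ L.getLast? = some Finset.univ) ∧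
    (∀ I : Finset α, (∀ u ∈ I, ∀ v, v ≤ u → v ∈ I) → I ≠ ∅ →
      ∃ L : List (Finset α), L.Nodup ∧
        (∀ J : Finset α, J ∈ L ↔ ∀ u ∈ J, ∀ v, v ≤ u → v ∈ J) ∧
        List.Chain' (fun A B => (symmDiff A B).card ≤ 3) L ∧
        L.head? = some I ∧ L.getLast? = some ∅) := by
  have hideal (J : Finset α) : IsLowerSet (J : Set α) ↔ ∀ u ∈ J, ∀ v, v ≤ u → v ∈ J :=
    ⟨fun h _ hu _ hvu => h hvu hu, fun h u v hvu hu => h u hu v hvu⟩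
  simp only [← hideal]
  have hacc := isAccessible_setOf_isLowerSet α
  exact ⟨fun I hI hne => stmt_19_general hacc hI (by simp [isLowerSet_univ]) hne,
    fun I hI hne => stmt_19_general hacc hI (by simp [isLowerSet_empty]) hne⟩
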